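/- arXiv:2012.00163 — 4 statements merged into one kernel-verified Lean document; each statement's English description precedes it below -/
import Mathlib

section
/- Let v : ℝ → ℝ be continuous on [−1,1] and let h1, h2 ∈ ℝ. Define u(x) = h1 + (x+1)·h2 + ∫_{−1}^x (x−s)·v(s) ds − (x+1)·∫_{−1}^{1} v(s) ds for x ∈ [−1,1]. Then u is twice continuously differentiable on [−1,1], u''(x) = v(x) for all x ∈ [−1,1], u(−1) = h1, and u'(1) = h2. -/
open Set intervalIntegral

/-- Converse direction of the scalar instance of the paper's Theorem 1 for
Dirichlet–Neumann boundary data: for any continuous fundamental state `v`, the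
primary state `u = K(x)B_T⁻¹h + 𝒯v` is twice continuously differentiable,
satisfies `u'' = v`, and the boundary conditions `u(-1) = h1`, `u'(1) = h2`. -/
theorem stmt_3 (v : ℝ → ℝ) (hv : ContinuousOn v (Icc (-1 : ℝ) 1)) (h1 h2 : ℝ)
    (u : ℝ → ℝ)
    (hu : ∀ x : ℝ, u x = h1 + (x + 1) * h2 + (∫ s in (-1 : ℝ)..x, (x - s) * v s) -
      (x + 1) * ∫ s in (-1 : ℝ)..(1 : ℝ), v s) :
    ContDiffOn ℝ 2 u (Icc (-1 : ℝ) 1) ∧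
    (∀ x ∈ Icc (-1 : ℝ) 1,
      derivWithin (derivWithin u (Icc (-1 : ℝ) 1)) (Icc (-1 : ℝ) 1) x = v x) ∧
    u (-1) = h1 ∧
    derivWithin u (Icc (-1 : ℝ) 1) 1 = h2 := by
  have hle : (-1 : ℝ) ≤ 1 := by norm_num
  set I := Icc (-1 : ℝ) 1 with hI
  -- continuous extension of `v`
  obtain ⟨w, hw, hwv⟩ : ∃ w : ℝ → ℝ, Continuous w ∧ ∀ x ∈ I, w x = v x :=
    ⟨IccExtend hle (I.domRestrict v), (continuousOn_iff_continuous_domRestrict.1 hv).Icc_extend',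
      fun x hx => IccExtend_of_mem hle _ hx⟩
  have hsw : Continuous fun s : ℝ => s * w s := continuous_id.mul hw
  set C := ∫ s in (-1 : ℝ)..(1 : ℝ), v s with hC
  have hCw : C = ∫ s in (-1 : ℝ)..(1 : ℝ), w s := by
    apply integral_congr
    intro s hs
    rw [uIcc_of_le hle] at hs
    exact (hwv s hs).symm
  have hueq : ∀ x ∈ I, u x = h1 + (x + 1) * h2 +
      (x * (∫ s in (-1 : ℝ)..x, w s) - ∫ s in (-1 : ℝ)..x, s * w s) - (x + 1) * C := by
    intro x hx
    rw [hu x]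
    congr 2
    have hxw : Continuous fun s : ℝ => x * w s := continuous_const.mul hw
    rw [← integral_const_mul, ← integral_sub
      (hxw.intervalIntegrable _ _) (hsw.intervalIntegrable _ _)]
    apply integral_congr
    intro s hs
    rw [uIcc_of_le hx.1] at hs
    have := hwv s ⟨hs.1, hs.2.trans hx.2⟩
    simp only [this]
    ring
  have hd1 : ∀ x, HasDerivAt (fun x => h1 + (x + 1) * h2 +
      (x * (∫ s in (-1 : ℝ)..x, w s) - ∫ s in (-1 : ℝ)..x, s * w s) - (x + 1) * C)
      (h2 + (∫ s in (-1 : ℝ)..x, w s) - C) x := by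
    intro x
    have a := hw.integral_hasStrictDerivAt (-1) x |>.hasDerivAt
    have b := hsw.integral_hasStrictDerivAt (-1) x |>.hasDerivAt
    have c := (hasDerivAt_id' x).add_const (1 : ℝ)
    have := (((c.mul_const h2).const_add h1).add (((hasDerivAt_id' x).mul a).sub b)).sub
      (c.mul_const C)
    refine this.congr_deriv ?_
    ring
  have hd2 : ∀ x, HasDerivAt (fun x => h2 + (∫ s in (-1 : ℝ)..x, w s) - C) (w x) x := by
    intro x
    have a := hw.integral_hasStrictDerivAt (-1) x |>.hasDerivAt
    exact (a.const_add h2).sub_const C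
  have hun : UniqueDiffOn ℝ I := uniqueDiffOn_Icc (by norm_num)
  have hD : ∀ x ∈ I, derivWithin u I x = h2 + (∫ s in (-1 : ℝ)..x, w s) - C := fun x hx =>
    ((hd1 x).hasDerivWithinAt.congr hueq (hueq x hx)).derivWithin (hun x hx)
  refine ⟨?_, ?_, ?_, ?_⟩
  · refine ContDiffOn.congr (ContDiff.contDiffOn ?_) hueq
    rw [show (2 : WithTop ℕ∞) = 1 + 1 by norm_num, contDiff_succ_iff_deriv]
    refine ⟨fun x => (hd1 x).differentiableAt, by simp, ?_⟩
    rw [funext fun x => (hd1 x).deriv, contDiff_one_iff_deriv, funext fun x => (hd2 x).deriv]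
    exact ⟨fun x => (hd2 x).differentiableAt, hw⟩
  · intro x hx
    rw [← hwv x hx]
    exact ((hd2 x).hasDerivWithinAt.congr hD (hD x hx)).derivWithin (hun x hx)
  · rw [hu]
    simp
  · rw [hD 1 ⟨hle, le_rfl⟩, hCw]
    ring
end

section
/- Let ν > 0 and let u : [−1,1] × [0,∞) → ℝ be such that the partial derivatives u_t, u_x, u_xx, ∂_t u_x and ∂_t u_xx exist and are continuous, with ∂_t u_x = ∂_x u_t and ∂_t u_xx = ∂_xx u_t. Suppose u satisfies the homogeneous Dirichlet–Neumann boundary conditions u(−1,t) = 0 and u_x(1,t) = 0 for all t ≥ 0. Set v(x,t) = u_xx(x,t). Then u satisfies the diffusion equation u_t(x,t) = ν·u_xx(x,t) for all (x,t) ∈ [−1,1] × [0,∞) if and only if v satisfies the partial integral equation ∫_{−1}^x (x−s)·∂_t v(s,t) ds − (x+1)·∫_{−1}^{1} ∂_t v(s,t) ds = ν·v(x,t) for all (x,t) ∈ [−1,1] × [0,∞). -/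
open Set intervalIntegral

/-- Instance of the paper's Theorem 2 for the constant-viscosity diffusion
equation `u_t = ν u_xx` on `[-1,1] × [0,∞)` with homogeneous Dirichlet boundary
condition at `x = -1` and homogeneous Neumann condition at `x = 1`: with the
fundamental state `v = u_xx`, the PDE holds if and only if the PIE
`∫_{-1}^x (x-s) v_t(s,t) ds - (x+1) ∫_{-1}^1 v_t(s,t) ds = ν v(x,t)` holds. -/
theorem stmt_5 (ν : ℝ) (hν : 0 < ν)
    (u ut ux uxx utx utxx : ℝ → ℝ → ℝ)
    -- `ut` is the time derivative of `u` on the domain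
    (hut : ∀ x ∈ Icc (-1 : ℝ) 1, ∀ t ∈ Ici (0 : ℝ),
      HasDerivWithinAt (fun τ => u x τ) (ut x t) (Ici 0) t)
    -- `ux` is the spatial derivative of `u`
    (hux : ∀ x ∈ Icc (-1 : ℝ) 1, ∀ t ∈ Ici (0 : ℝ),
      HasDerivWithinAt (fun ξ => u ξ t) (ux x t) (Icc (-1) 1) x)
    -- `uxx` is the spatial derivative of `ux`
    (huxx : ∀ x ∈ Icc (-1 : ℝ) 1, ∀ t ∈ Ici (0 : ℝ),
      HasDerivWithinAt (fun ξ => ux ξ t) (uxx x t) (Icc (-1) 1) x)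
    -- `utx` is the time derivative of `ux`, i.e. `∂_t u_x` exists
    (hutx : ∀ x ∈ Icc (-1 : ℝ) 1, ∀ t ∈ Ici (0 : ℝ),
      HasDerivWithinAt (fun τ => ux x τ) (utx x t) (Ici 0) t)
    -- `utxx` is the time derivative of `uxx`, i.e. `∂_t u_xx` exists
    (hutxx : ∀ x ∈ Icc (-1 : ℝ) 1, ∀ t ∈ Ici (0 : ℝ),
      HasDerivWithinAt (fun τ => uxx x τ) (utxx x t) (Ici 0) t)
    -- commutation `∂_t u_x = ∂_x u_t`
    (hcomm1 : ∀ x ∈ Icc (-1 : ℝ) 1, ∀ t ∈ Ici (0 : ℝ),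
      HasDerivWithinAt (fun ξ => ut ξ t) (utx x t) (Icc (-1) 1) x)
    -- commutation `∂_t u_xx = ∂_xx u_t`
    (hcomm2 : ∀ x ∈ Icc (-1 : ℝ) 1, ∀ t ∈ Ici (0 : ℝ),
      HasDerivWithinAt (fun ξ => utx ξ t) (utxx x t) (Icc (-1) 1) x)
    -- continuity of all the partial derivatives on the domain
    (hct : ContinuousOn (fun p : ℝ × ℝ => ut p.1 p.2) (Icc (-1 : ℝ) 1 ×ˢ Ici (0 : ℝ)))
    (hcx : ContinuousOn (fun p : ℝ × ℝ => ux p.1 p.2) (Icc (-1 : ℝ) 1 ×ˢ Ici (0 : ℝ)))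
    (hcxx : ContinuousOn (fun p : ℝ × ℝ => uxx p.1 p.2) (Icc (-1 : ℝ) 1 ×ˢ Ici (0 : ℝ)))
    (hctx : ContinuousOn (fun p : ℝ × ℝ => utx p.1 p.2) (Icc (-1 : ℝ) 1 ×ˢ Ici (0 : ℝ)))
    (hctxx : ContinuousOn (fun p : ℝ × ℝ => utxx p.1 p.2) (Icc (-1 : ℝ) 1 ×ˢ Ici (0 : ℝ)))
    -- homogeneous Dirichlet–Neumann boundary conditions
    (hbc1 : ∀ t ∈ Ici (0 : ℝ), u (-1) t = 0)
    (hbc2 : ∀ t ∈ Ici (0 : ℝ), ux 1 t = 0) :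
    (∀ x ∈ Icc (-1 : ℝ) 1, ∀ t ∈ Ici (0 : ℝ), ut x t = ν * uxx x t) ↔
    (∀ x ∈ Icc (-1 : ℝ) 1, ∀ t ∈ Ici (0 : ℝ),
      (∫ s in (-1 : ℝ)..x, (x - s) * utxx s t) -
        (x + 1) * (∫ s in (-1 : ℝ)..(1 : ℝ), utxx s t) = ν * uxx x t) := by
  have key : ∀ x ∈ Icc (-1 : ℝ) 1, ∀ t ∈ Ici (0 : ℝ),
      (∫ s in (-1 : ℝ)..x, (x - s) * utxx s t) -
        (x + 1) * (∫ s in (-1 : ℝ)..(1 : ℝ), utxx s t) = ut x t := by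
    intro x hx t ht
    have hm : (-1 : ℝ) ∈ Icc (-1 : ℝ) 1 := by constructor <;> norm_num
    have h1 : (1 : ℝ) ∈ Icc (-1 : ℝ) 1 := by constructor <;> norm_num
    have hcont : ContinuousOn (fun s => utxx s t) (Icc (-1 : ℝ) 1) :=
      hctxx.comp (f := fun s : ℝ => (s, t)) (by fun_prop) (fun s hs => ⟨hs, ht⟩)
    have e1 : ut (-1) t = 0 := by
      have a := hut (-1) hm t ht
      have b : HasDerivWithinAt (fun τ => u (-1) τ) 0 (Ici 0) t :=
        (hasDerivWithinAt_const t (Ici (0 : ℝ)) (0 : ℝ)).congr hbc1 (hbc1 t ht)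
      exact (uniqueDiffOn_Ici (0 : ℝ) t ht).eq_deriv _ a b
    have e2 : utx 1 t = 0 := by
      have a := hutx 1 h1 t ht
      have b : HasDerivWithinAt (fun τ => ux 1 τ) 0 (Ici 0) t :=
        (hasDerivWithinAt_const t (Ici (0 : ℝ)) (0 : ℝ)).congr hbc2 (hbc2 t ht)
      exact (uniqueDiffOn_Ici (0 : ℝ) t ht).eq_deriv _ a b
    have i1 : (∫ s in (-1 : ℝ)..(1 : ℝ), utxx s t) = utx 1 t - utx (-1) t := by
      refine integral_eq_sub_of_hasDerivAt_of_le (f := fun s => utx s t) (by norm_num)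
        (fun s hs => (hcomm2 s hs t ht).continuousWithinAt) ?_ ?_
      · intro s hs
        exact (hcomm2 s (Ioo_subset_Icc_self hs) t ht).hasDerivAt (Icc_mem_nhds hs.1 hs.2)
      · exact hcont.intervalIntegrable_of_Icc (by norm_num)
    have hsub : Icc (-1 : ℝ) x ⊆ Icc (-1) 1 := Icc_subset_Icc_right hx.2
    have hd : ∀ s ∈ Icc (-1 : ℝ) 1,
        HasDerivWithinAt (fun s => (x - s) * utx s t + ut s t) ((x - s) * utxx s t)
          (Icc (-1) 1) s := by
      intro s hs
      have := ((((hasDerivWithinAt_id s (Icc (-1 : ℝ) 1)).const_sub x).mul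
        (hcomm2 s hs t ht)).add (hcomm1 s hs t ht))
      refine this.congr_deriv ?_
      simp only [id]
      ring
    have i2 : (∫ s in (-1 : ℝ)..x, (x - s) * utxx s t) =
        ((x - x) * utx x t + ut x t) - ((x - (-1)) * utx (-1) t + ut (-1) t) := by
      refine integral_eq_sub_of_hasDerivAt_of_le
        (f := fun s => (x - s) * utx s t + ut s t) hx.1
        (fun s hs => ((hd s (hsub hs)).continuousWithinAt).mono hsub) ?_ ?_
      · intro s hs
        exact (hd s (hsub (Ioo_subset_Icc_self hs))).hasDerivAt
          (Icc_mem_nhds hs.1 (hs.2.trans_le hx.2))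
      · refine ContinuousOn.intervalIntegrable_of_Icc hx.1 ?_
        exact ContinuousOn.mul (by fun_prop) (hcont.mono hsub)
    rw [i1, i2, e1, e2]
    ring
  constructor
  · intro h x hx t ht
    rw [key x hx t ht, h x hx t ht]
  · intro h x hx t ht
    rw [← key x hx t ht, h x hx t ht]
end

section
/- Let c ∈ ℝ, let h : [0,∞) → ℝ be continuously differentiable, and let u : [−1,1] × [0,∞) → ℝ be such that the partial derivatives u_t, u_x and ∂_t u_x exist and are continuous, with ∂_t u_x = ∂_x u_t. Suppose u satisfies the Dirichlet boundary condition u(−1,t) = h(t) for all t ≥ 0. Set v(x,t) = u_x(x,t). Then u satisfies the transport equation u_t(x,t) + c·u_x(x,t) = 0 for all (x,t) ∈ [−1,1] × [0,∞) if and only if v satisfies the partial integral equation ∫_{−1}^x ∂_t v(s,t) ds = −c·v(x,t) − h'(t) for all (x,t) ∈ [−1,1] × [0,∞). -/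
open Set intervalIntegral

/-- Instance of the paper's Theorem 2 with an inhomogeneous boundary input, for
the transport equation `u_t + c u_x = 0` on `[-1,1] × [0,∞)` with Dirichlet
boundary condition `u(-1,t) = h(t)`: with the fundamental state `v = u_x`, the
PDE holds iff the PIE `∫_{-1}^x v_t(s,t) ds = -c v(x,t) - h'(t)` holds. -/
theorem stmt_6 (c : ℝ) (h h' : ℝ → ℝ)
    -- `h` is continuously differentiable on `[0,∞)` with derivative `h'`
    (hh : ∀ t ∈ Ici (0 : ℝ), HasDerivWithinAt h (h' t) (Ici 0) t)
    (hh' : ContinuousOn h' (Ici (0 : ℝ)))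
    (u ut ux utx : ℝ → ℝ → ℝ)
    -- `ut` is the time derivative of `u` on the domain
    (hut : ∀ x ∈ Icc (-1 : ℝ) 1, ∀ t ∈ Ici (0 : ℝ),
      HasDerivWithinAt (fun τ => u x τ) (ut x t) (Ici 0) t)
    -- `ux` is the spatial derivative of `u`
    (hux : ∀ x ∈ Icc (-1 : ℝ) 1, ∀ t ∈ Ici (0 : ℝ),
      HasDerivWithinAt (fun ξ => u ξ t) (ux x t) (Icc (-1) 1) x)
    -- `utx` is the time derivative of `ux`, i.e. `∂_t u_x` exists
    (hutx : ∀ x ∈ Icc (-1 : ℝ) 1, ∀ t ∈ Ici (0 : ℝ),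
      HasDerivWithinAt (fun τ => ux x τ) (utx x t) (Ici 0) t)
    -- commutation `∂_t u_x = ∂_x u_t`
    (hcomm : ∀ x ∈ Icc (-1 : ℝ) 1, ∀ t ∈ Ici (0 : ℝ),
      HasDerivWithinAt (fun ξ => ut ξ t) (utx x t) (Icc (-1) 1) x)
    -- continuity of the partial derivatives on the domain
    (hct : ContinuousOn (fun p : ℝ × ℝ => ut p.1 p.2) (Icc (-1 : ℝ) 1 ×ˢ Ici (0 : ℝ)))
    (hcx : ContinuousOn (fun p : ℝ × ℝ => ux p.1 p.2) (Icc (-1 : ℝ) 1 ×ˢ Ici (0 : ℝ)))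
    (hctx : ContinuousOn (fun p : ℝ × ℝ => utx p.1 p.2) (Icc (-1 : ℝ) 1 ×ˢ Ici (0 : ℝ)))
    -- Dirichlet boundary condition
    (hbc : ∀ t ∈ Ici (0 : ℝ), u (-1) t = h t) :
    (∀ x ∈ Icc (-1 : ℝ) 1, ∀ t ∈ Ici (0 : ℝ), ut x t + c * ux x t = 0) ↔
    (∀ x ∈ Icc (-1 : ℝ) 1, ∀ t ∈ Ici (0 : ℝ),
      (∫ s in (-1 : ℝ)..x, utx s t) = -c * ux x t - h' t) := by
  have key : ∀ x ∈ Icc (-1 : ℝ) 1, ∀ t ∈ Ici (0 : ℝ),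
      (∫ s in (-1 : ℝ)..x, utx s t) = ut x t - h' t := by
    intro x hx t ht
    have hb : ut (-1) t = h' t := by
      have h1 := hut (-1) (by norm_num) t ht
      have h2 : HasDerivWithinAt (fun τ => u (-1) τ) (h' t) (Ici 0) t :=
        (hh t ht).congr (fun τ hτ => hbc τ hτ) (hbc t ht)
      exact (uniqueDiffOn_Ici (0 : ℝ) t ht).eq_deriv _ h1 h2
    have hsub : Icc (-1 : ℝ) x ⊆ Icc (-1) 1 := Icc_subset_Icc le_rfl hx.2
    rw [← hb]
    apply integral_eq_sub_of_hasDerivAt_of_le hx.1 (f := fun ξ => ut ξ t)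
    · intro y hy
      exact ((hcomm y (hsub hy) t ht).continuousWithinAt).mono hsub
    · intro y hy
      exact (hcomm y (hsub (Ioo_subset_Icc_self hy)) t ht).hasDerivAt
        (Icc_mem_nhds hy.1 (hy.2.trans_le hx.2))
    · apply ContinuousOn.intervalIntegrable
      rw [uIcc_of_le hx.1]
      exact hctx.comp (f := fun s : ℝ => (s, t)) (by fun_prop) (fun s hs => ⟨hsub hs, ht⟩)
  constructor
  · intro H x hx t ht
    rw [key x hx t ht]
    linarith [H x hx t ht]
  · intro H x hx t ht
    have := H x hx t ht
    rw [key x hx t ht] at this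
    linarith
end

section
/- Let L > 0 and β > 0 be real numbers satisfying cos(βL)·cosh(βL) = −1 and sin(βL) + sinh(βL) ≠ 0. Define σ = (cos(βL) + cosh(βL))/(sin(βL) + sinh(βL)) and w(x) = cosh(βx) − cos(βx) + σ·(sin(βx) − sinh(βx)). Then w satisfies the fourth-order ODE w''''(x) = β⁴·w(x) for all x ∈ ℝ, together with the cantilever boundary conditions w(0) = 0, w'(0) = 0, w''(L) = 0, and w'''(L) = 0. -/
open Real

/-- Derivative of a general combination of the four basic solutions. -/
lemma beam_deriv (β a b c d : ℝ) :
    deriv (fun x : ℝ => a * Real.cosh (β * x) + b * Real.sinh (β * x)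
      + c * Real.cos (β * x) + d * Real.sin (β * x)) =
    fun x : ℝ => (β * b) * Real.cosh (β * x) + (β * a) * Real.sinh (β * x)
      + (β * d) * Real.cos (β * x) + (-(β * c)) * Real.sin (β * x) := by
  funext x
  have h : HasDerivAt (fun x : ℝ => β * x) β x := by
    simpa using (hasDerivAt_id x).const_mul β
  have := (((h.cosh.const_mul a).add (h.sinh.const_mul b)).add (h.cos.const_mul c)).add
    (h.sin.const_mul d)
  refine (HasDerivAt.deriv (this.congr_deriv ?_))
  ring

/-- Free-vibration eigenmode of the cantilevered Euler–Bernoulli beam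
(Example 4 of the paper): the mode shape `w` built from a root `β` of the
transcendental equation `cos(βL)·cosh(βL) = -1` solves `w'''' = β⁴ w` with the
cantilever boundary conditions `w(0) = w'(0) = 0`, `w''(L) = w'''(L) = 0`. -/
theorem stmt_7 (L β : ℝ) (hL : 0 < L) (hβ : 0 < β)
    (heig : Real.cos (β * L) * Real.cosh (β * L) = -1)
    (hden : Real.sin (β * L) + Real.sinh (β * L) ≠ 0)
    (σ : ℝ)
    (hσ : σ = (Real.cos (β * L) + Real.cosh (β * L)) /
      (Real.sin (β * L) + Real.sinh (β * L)))
    (w : ℝ → ℝ)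
    (hw : ∀ x : ℝ, w x = Real.cosh (β * x) - Real.cos (β * x) +
      σ * (Real.sin (β * x) - Real.sinh (β * x))) :
    (∀ x : ℝ, iteratedDeriv 4 w x = β ^ 4 * w x) ∧
    w 0 = 0 ∧ deriv w 0 = 0 ∧
    iteratedDeriv 2 w L = 0 ∧ iteratedDeriv 3 w L = 0 := by
  have hw' : w = fun x : ℝ => 1 * Real.cosh (β * x) + (-σ) * Real.sinh (β * x)
      + (-1) * Real.cos (β * x) + σ * Real.sin (β * x) := by
    funext x
    rw [hw]
    ring
  have hS : σ * (Real.sin (β * L) + Real.sinh (β * L)) =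
      Real.cos (β * L) + Real.cosh (β * L) := by
    rw [hσ]
    field_simp
  have h1 := Real.sin_sq_add_cos_sq (β * L)
  have h2 := Real.cosh_sq (β * L)
  have hT : Real.sinh (β * L) - Real.sin (β * L) =
      σ * (Real.cos (β * L) + Real.cosh (β * L)) := by
    apply mul_right_cancel₀ hden
    linear_combination (-(Real.cos (β * L) + Real.cosh (β * L))) * hS - h1 - h2 - 2 * heig
  refine ⟨fun x => ?_, ?_, ?_, ?_, ?_⟩
  · rw [hw']
    simp only [iteratedDeriv_succ, iteratedDeriv_zero, beam_deriv]
    ring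
  · simp [hw]
  · rw [hw', beam_deriv]
    simp
  · rw [hw']
    simp only [iteratedDeriv_succ, iteratedDeriv_zero, beam_deriv]
    linear_combination (-β ^ 2) * hS
  · rw [hw']
    simp only [iteratedDeriv_succ, iteratedDeriv_zero, beam_deriv]
    linear_combination (β ^ 3) * hT
end
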